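/- arXiv:1805.01121 — 2 statements merged into one kernel-verified Lean document; each statement's English description precedes it below -/
import Mathlib

section
/- Let n be a positive integer, let q be a real number with 0 < q < 1, and let z > 0 be real. Then ∏_{k=0}^{n-1} Γ_{q^n}(z + k/n) = (((q^n; q^n)_∞)^n (1-q^n)^{(n-1)/2} / (q; q)_∞) · ((1-q^n)/(1-q))^{1-nz} · Γ_q(nz). (This corrects the formula of Mahmoud and Agarwal, whose right-hand side had the factor (1-q)^{(n-1)/2} in place of (1-q^n)^{(n-1)/2}.) -/
/-- Infinite q-Pochhammer symbol `(a; q)_∞ = ∏_{i=0}^∞ (1 - a qⁱ)` (real version). -/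
noncomputable def qPochR (a q : ℝ) : ℝ := ∏' i : ℕ, (1 - a * q ^ i)

/-- The q-gamma function `Γ_q(z) = ((q;q)_∞ / (q^z;q)_∞) (1-q)^{1-z}` for `0 < q < 1`. -/
noncomputable def qGamma (q z : ℝ) : ℝ :=
  qPochR q q / qPochR (q ^ z) q * (1 - q) ^ (1 - z)

open Filter Topology

lemma multipliable_one_sub_mul_pow (a : ℝ) {q : ℝ} (hq0 : 0 < q) (hq1 : q < 1) :
    Multipliable fun i : ℕ => 1 - a * q ^ i := by
  have h := Real.multipliable_one_add_of_summable
    (((summable_geometric_of_lt_one hq0.le hq1).mul_left a).neg)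
  simpa only [sub_eq_add_neg] using h

lemma tendsto_prod_range_qPochR (a : ℝ) {q : ℝ} (hq0 : 0 < q) (hq1 : q < 1) :
    Tendsto (fun N => ∏ i ∈ Finset.range N, (1 - a * q ^ i)) atTop (𝓝 (qPochR a q)) :=
  (multipliable_one_sub_mul_pow a hq0 hq1).hasProd.tendsto_prod_nat

lemma qPochR_ne_zero {a q : ℝ} (ha0 : 0 < a) (ha1 : a < 1) (hq0 : 0 < q) (hq1 : q < 1) :
    qPochR a q ≠ 0 := by
  have hs : Summable fun i : ℕ => -(a * q ^ i) :=
    ((summable_geometric_of_lt_one hq0.le hq1).mul_left a).neg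
  have hpos (i : ℕ) : 0 < 1 + -(a * q ^ i) := by
    have h₁ : q ^ i ≤ 1 := pow_le_one₀ hq0.le hq1.le
    nlinarith
  have h := Real.rexp_tsum_eq_tprod hpos (Real.summable_log_one_add_of_summable hs)
  simp only [← sub_eq_add_neg] at h
  rw [qPochR, ← h]
  exact (Real.exp_pos _).ne'

lemma prod_range_mul_eq_prod_prod {M : Type*} [CommMonoid M] (f : ℕ → M) (n N : ℕ) :
    ∏ i ∈ Finset.range (n * N), f i =
      ∏ k ∈ Finset.range n, ∏ j ∈ Finset.range N, f (n * j + k) := by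
  rw [Finset.prod_comm]
  induction N with
  | zero => simp
  | succ N ih => rw [Nat.mul_succ, Finset.prod_range_add, ih, Finset.prod_range_succ]

/-- Splitting `(a; q)_∞` according to the residue of the index modulo `n`. -/
lemma prod_qPochR_mul_pow (a : ℝ) {q : ℝ} (hq0 : 0 < q) (hq1 : q < 1) {n : ℕ} (hn : 0 < n) :
    ∏ k ∈ Finset.range n, qPochR (a * q ^ k) (q ^ n) = qPochR a q := by
  have hsub : Tendsto (fun N => n * N) atTop atTop := tendsto_id.const_mul_atTop' hn
  refine tendsto_nhds_unique ?_ ((tendsto_prod_range_qPochR a hq0 hq1).comp hsub)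
  have h : Tendsto
      (fun N => ∏ k ∈ Finset.range n, ∏ j ∈ Finset.range N, (1 - a * q ^ k * (q ^ n) ^ j))
      atTop (𝓝 (∏ k ∈ Finset.range n, qPochR (a * q ^ k) (q ^ n))) :=
    tendsto_finsetProd _ fun k _ => tendsto_prod_range_qPochR _ (pow_pos hq0 n)
      (pow_lt_one₀ hq0.le hq1 hn.ne')
  refine h.congr fun N => ?_
  simp only [Function.comp_apply, prod_range_mul_eq_prod_prod]
  refine Finset.prod_congr rfl fun k _ => Finset.prod_congr rfl fun j _ => ?_
  rw [pow_add, pow_mul]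
  ring

lemma sum_range_one_sub_add_div {n : ℕ} (hn : 0 < n) (z : ℝ) :
    ∑ k ∈ Finset.range n, (1 - (z + (k : ℝ) / n)) = ((n : ℝ) - 1) / 2 + (1 - n * z) := by
  have hn' : (n : ℝ) ≠ 0 := by positivity
  have hgauss (m : ℕ) : ∑ k ∈ Finset.range m, (k : ℝ) = m * (m - 1) / 2 := by
    induction m with
    | zero => simp
    | succ m ih => rw [Finset.sum_range_succ, ih]; push_cast; ring
  simp only [Finset.sum_sub_distrib, Finset.sum_add_distrib, ← Finset.sum_div, hgauss,
    Finset.sum_const, Finset.card_range, nsmul_eq_mul]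
  field_simp
  ring

theorem corrected_mahmoud_agarwal (n : ℕ) (hn : 0 < n) (q : ℝ)
    (hq0 : 0 < q) (hq1 : q < 1) (z : ℝ) (hz : 0 < z) :
    ∏ k ∈ Finset.range n, qGamma (q ^ n) (z + (k : ℝ) / n) =
      (qPochR (q ^ n) (q ^ n)) ^ n * (1 - q ^ n) ^ (((n : ℝ) - 1) / 2) / qPochR q q *
        ((1 - q ^ n) / (1 - q)) ^ (1 - (n : ℝ) * z) * qGamma q ((n : ℝ) * z) := by
  have hn' : (n : ℝ) ≠ 0 := by positivity
  have hp : 0 < 1 - q ^ n := sub_pos.2 (pow_lt_one₀ hq0.le hq1 hn.ne')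
  have hq : 0 < 1 - q := sub_pos.2 hq1
  have hbase (k : ℕ) : (q ^ n) ^ (z + (k : ℝ) / n) = q ^ ((n : ℝ) * z) * q ^ k := by
    rw [← Real.rpow_natCast q n, ← Real.rpow_mul hq0.le, ← Real.rpow_natCast q k,
      ← Real.rpow_add hq0]
    congr 1
    field_simp
  have hP : qPochR q q ≠ 0 := qPochR_ne_zero hq0 hq1 hq0 hq1
  have hr : (1 - q) ^ (1 - (n : ℝ) * z) ≠ 0 := (Real.rpow_pos_of_pos hq _).ne'
  simp only [qGamma, hbase, Finset.prod_mul_distrib, Finset.prod_div_distrib,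
    prod_qPochR_mul_pow _ hq0 hq1 hn, Finset.prod_const, Finset.card_range]
  rw [← Real.rpow_sum_of_pos hp, sum_range_one_sub_add_div hn, Real.rpow_add hp,
    Real.div_rpow hp.le hq.le]
  field_simp
end

section
/- Let n ≥ 2 be an integer, let τ be a complex number with Im(τ) > 0, set q = e^{πiτ} and τ' = -1/τ. Then for every integer j with 1 ≤ j ≤ n-2, θ₁(jπ/n | τ'/n) = (-iτ'/n)^{-1/2} · q^{j²/n + n/4 - j} · (q^{2j}, q^{2n-2j}, q^{2n}; q^{2n})_∞, where q^{j²/n + n/4 - j} denotes e^{πiτ(j²/n + n/4 - j)} and (-iτ'/n)^{-1/2} is taken with the principal branch of the square root. -/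
open Complex

/-- Infinite q-Pochhammer symbol `(a; q)_∞ = ∏_{i=0}^∞ (1 - a qⁱ)`. -/
noncomputable def qPoch (a q : ℂ) : ℂ := ∏' i : ℕ, (1 - a * q ^ i)

/-- Jacobi's first theta function
`θ₁(z | τ) = 2 ∑_{n=0}^∞ (-1)ⁿ e^{πiτ(2n+1)²/4} sin((2n+1)z)`. -/
noncomputable def theta1 (z τ : ℂ) : ℂ :=
  2 * ∑' n : ℕ, (-1 : ℂ) ^ n * Complex.exp (Real.pi * Complex.I * τ * (2 * n + 1) ^ 2 / 4) *
    Complex.sin ((2 * n + 1) * z)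

open Filter Topology Finset

/-- The finite q-Pochhammer symbol `(a; q)_N = ∏_{i=0}^{N-1} (1 - a qⁱ)`. -/
noncomputable def qPochFin (a q : ℂ) (N : ℕ) : ℂ := ∏ i ∈ range N, (1 - a * q ^ i)

/-- Gaussian binomial coefficients, defined by the q-Pascal recursion. -/
noncomputable def gaussBinom (q : ℂ) : ℕ → ℕ → ℂ
  | _, 0 => 1
  | 0, _ + 1 => 0
  | n + 1, k + 1 => gaussBinom q n k + q ^ (k + 1) * gaussBinom q n (k + 1)

lemma gaussBinom_zero_right (q : ℂ) (n : ℕ) : gaussBinom q n 0 = 1 := by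
  cases n <;> rfl

lemma gaussBinom_succ_succ (q : ℂ) (n k : ℕ) :
    gaussBinom q (n + 1) (k + 1) =
      gaussBinom q n k + q ^ (k + 1) * gaussBinom q n (k + 1) := rfl

lemma gaussBinom_eq_zero_of_lt (q : ℂ) {n k : ℕ} (h : n < k) : gaussBinom q n k = 0 := by
  induction n generalizing k with
  | zero => obtain ⟨k, rfl⟩ := Nat.exists_eq_succ_of_ne_zero h.ne'; rfl
  | succ n ih =>
    obtain ⟨k, rfl⟩ := Nat.exists_eq_succ_of_ne_zero (Nat.ne_zero_of_lt h)
    rw [Nat.succ_eq_add_one, gaussBinom_succ_succ, ih (by lia), ih (by lia)]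
    simp

lemma gaussBinom_self (q : ℂ) (n : ℕ) : gaussBinom q n n = 1 := by
  induction n with
  | zero => rfl
  | succ n ih => rw [gaussBinom_succ_succ, ih, gaussBinom_eq_zero_of_lt q (by lia)]; simp

lemma qPochFin_succ (a q : ℂ) (N : ℕ) :
    qPochFin a q (N + 1) = qPochFin a q N * (1 - a * q ^ N) :=
  prod_range_succ _ _

lemma gaussBinom_mul_qPochFin (q : ℂ) (n k : ℕ) :
    gaussBinom q (n + k) k * (qPochFin q q k * qPochFin q q n) = qPochFin q q (n + k) := by
  induction n generalizing k with
  | zero => simp [gaussBinom_self, qPochFin]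
  | succ n ihn =>
    induction k with
    | zero => simp [gaussBinom_zero_right, qPochFin]
    | succ k ihk =>
      have h := ihn (k + 1)
      have e : n + 1 + k = n + (k + 1) := by ring
      rw [← add_assoc (n + 1), gaussBinom_succ_succ]
      rw [e] at ihk ⊢
      simp only [qPochFin_succ q q (n + (k + 1)), ← h]
      simp only [qPochFin_succ q q n, qPochFin_succ q q k] at *
      rw [← h] at ihk
      linear_combination (1 - q * q ^ k) * ihk

/-- The q-binomial theorem. -/
lemma prod_one_add_mul_pow (q x : ℂ) (n : ℕ) :
    ∏ i ∈ range n, (1 + x * q ^ i) =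
      ∑ k ∈ range (n + 1), q ^ k.choose 2 * gaussBinom q n k * x ^ k := by
  induction n generalizing x with
  | zero => simp [gaussBinom_zero_right]
  | succ n ih =>
    have h : ∏ i ∈ range n, (1 + x * q ^ (i + 1)) = ∏ i ∈ range n, (1 + x * q * q ^ i) :=
      prod_congr rfl fun i _ => by ring
    rw [prod_range_succ', h, ih, pow_zero, mul_one, mul_add, mul_one, sum_range_succ' _ (n + 1)]
    have shift : ∑ k ∈ range (n + 1), q ^ k.choose 2 * gaussBinom q n k * (x * q) ^ k =
        ∑ k ∈ range (n + 1),
          q ^ (k + 1).choose 2 * gaussBinom q n (k + 1) * (x * q) ^ (k + 1) + 1 := by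
      rw [sum_range_succ', sum_range_succ _ n, gaussBinom_eq_zero_of_lt q (Nat.lt_succ_self n)]
      simp [gaussBinom_zero_right]
    conv_lhs => enter [1]; rw [shift]
    rw [add_right_comm, sum_mul, ← sum_add_distrib]
    congr 1
    · refine sum_congr rfl fun k _ => ?_
      rw [gaussBinom_succ_succ, Nat.choose_succ_succ' k 1, Nat.choose_one_right]
      ring
    · simp [gaussBinom_zero_right]

lemma summable_norm_neg_mul_pow (a : ℂ) {q : ℂ} (hq : ‖q‖ < 1) :
    Summable fun i : ℕ => ‖-(a * q ^ i)‖ := by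
  simpa [norm_mul, norm_pow] using
    (summable_geometric_of_lt_one (norm_nonneg q) hq).mul_left ‖a‖

lemma tendsto_qPochFin (a : ℂ) {q : ℂ} (hq : ‖q‖ < 1) :
    Tendsto (qPochFin a q) atTop (𝓝 (qPoch a q)) := by
  have := (multipliable_one_add_of_summable
    (summable_norm_neg_mul_pow a hq)).tendsto_prod_tprod_nat
  simp only [← sub_eq_add_neg] at this
  exact this

lemma one_sub_mul_pow_ne_zero {q : ℂ} (hq : ‖q‖ < 1) (i : ℕ) : 1 - q * q ^ i ≠ 0 := by
  rw [← pow_succ', sub_ne_zero]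
  intro h
  have := pow_lt_one₀ (norm_nonneg q) hq i.succ_ne_zero
  rw [← norm_pow, ← h, norm_one] at this
  exact lt_irrefl _ this

lemma qPochFin_self_ne_zero {q : ℂ} (hq : ‖q‖ < 1) (N : ℕ) : qPochFin q q N ≠ 0 :=
  prod_ne_zero_iff.mpr fun i _ => one_sub_mul_pow_ne_zero hq i

lemma qPoch_self_ne_zero {q : ℂ} (hq : ‖q‖ < 1) : qPoch q q ≠ 0 := by
  have := tprod_one_add_ne_zero_of_summable (f := fun i : ℕ => -(q * q ^ i))
    (fun i => by simpa only [← sub_eq_add_neg] using one_sub_mul_pow_ne_zero hq i)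
    (summable_norm_neg_mul_pow q hq)
  simp only [← sub_eq_add_neg] at this
  exact this

lemma gaussBinom_eq_div {q : ℂ} (hq : ‖q‖ < 1) (n k : ℕ) :
    gaussBinom q (n + k) k =
      qPochFin q q (n + k) * (qPochFin q q k)⁻¹ * (qPochFin q q n)⁻¹ := by
  have h1 := qPochFin_self_ne_zero hq k
  have h2 := qPochFin_self_ne_zero hq n
  rw [← gaussBinom_mul_qPochFin]
  field_simp

/-- The Gaussian binomial coefficients with fixed `|q| < 1` are uniformly bounded. -/
lemma exists_norm_gaussBinom_le {q : ℂ} (hq : ‖q‖ < 1) :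
    ∃ C : ℝ, ∀ n k, ‖gaussBinom q n k‖ ≤ C := by
  have ht := tendsto_qPochFin q hq
  obtain ⟨A, hA⟩ := ht.norm.bddAbove_range
  obtain ⟨B, hB⟩ := (ht.inv₀ (qPoch_self_ne_zero hq)).norm.bddAbove_range
  replace hA n : ‖qPochFin q q n‖ ≤ A := hA ⟨n, rfl⟩
  replace hB n : ‖(qPochFin q q n)⁻¹‖ ≤ B := hB ⟨n, rfl⟩
  have hA0 : 0 ≤ A := (norm_nonneg _).trans (hA 0)
  have hB0 : 0 ≤ B := (norm_nonneg _).trans (hB 0)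
  refine ⟨A * B * B, fun n k => ?_⟩
  rcases lt_or_ge n k with h | h
  · rw [gaussBinom_eq_zero_of_lt q h, norm_zero]
    positivity
  · obtain ⟨m, rfl⟩ := Nat.exists_eq_add_of_le' h
    rw [gaussBinom_eq_div hq, norm_mul, norm_mul]
    gcongr <;> apply_assumption

/-- The finite form of Jacobi's triple product identity. -/
lemma qPochFin_mul_qPochFin_eq_sum (u T : ℂ) (N : ℕ) :
    qPochFin (cexp (2 * Real.pi * I * u)) (cexp (2 * Real.pi * I * T)) N *
      qPochFin (cexp (2 * Real.pi * I * (T - u))) (cexp (2 * Real.pi * I * T)) N =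
    ∑ m ∈ range (2 * N + 1), jacobiTheta₂_term ((m : ℤ) - N) (u - T / 2 + 1 / 2) T *
      gaussBinom (cexp (2 * Real.pi * I * T)) (2 * N) m := by
  set Q := cexp (2 * Real.pi * I * T) with hQ
  set y := cexp (2 * Real.pi * I * (u - N * T + 1 / 2)) with hy
  have hneg (w : ℂ) : cexp (2 * Real.pi * I * (w + 1 / 2)) = -cexp (2 * Real.pi * I * w) := by
    rw [← Complex.exp_add_pi_mul_I]
    congr 1
    ring
  have hQpow (k : ℕ) : Q ^ k = cexp (2 * Real.pi * I * (k * T)) := by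
    rw [hQ, ← Complex.exp_nat_mul]
    congr 1
    ring
  have hypow (k : ℕ) : y ^ k = cexp (2 * Real.pi * I * (k * (u - N * T + 1 / 2))) := by
    rw [hy, ← Complex.exp_nat_mul]
    congr 1
    ring
  have hfac : y ^ N * Q ^ N.choose 2 ≠ 0 :=
    mul_ne_zero (pow_ne_zero _ (Complex.exp_ne_zero _)) (pow_ne_zero _ (Complex.exp_ne_zero _))
  refine mul_left_cancel₀ hfac ?_
  trans ∏ i ∈ range (2 * N), (1 + y * Q ^ i)
  · rw [two_mul N, prod_range_add, mul_comm (qPochFin _ _ _), ← mul_assoc]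
    congr 1
    · rw [← prod_range_reflect (fun i => 1 + y * Q ^ i), qPochFin]
      have : y ^ N * Q ^ N.choose 2 = ∏ i ∈ range N, (y * Q ^ (N - 1 - i)) := by
        rw [prod_range_reflect (fun i => y * Q ^ i), prod_mul_distrib, prod_const, card_range,
          prod_pow_eq_pow_sum, sum_range_id, Nat.choose_two_right]
      rw [this, ← prod_mul_distrib]
      refine prod_congr rfl fun i hi => ?_
      have hi' : i + 1 ≤ N := mem_range.mp hi
      have hcast : ((N - 1 - i : ℕ) : ℂ) = N - 1 - i := by
        rw [Nat.sub_sub, Nat.cast_sub (by lia)]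
        push_cast
        ring
      have : y * Q ^ (N - 1 - i) * (cexp (2 * Real.pi * I * (T - u)) * Q ^ i) = -1 := by
        rw [hQpow, hQpow, hy, hcast, ← Complex.exp_add, ← Complex.exp_add, ← Complex.exp_add,
          ← Complex.exp_pi_mul_I]
        congr 1
        ring
      linear_combination -this
    · refine prod_congr rfl fun i _ => ?_
      have : y * Q ^ N = -cexp (2 * Real.pi * I * u) := by
        rw [hQpow, hy, ← Complex.exp_add, ← hneg]
        congr 1
        ring
      rw [pow_add]
      linear_combination -Q ^ i * this
  · rw [prod_one_add_mul_pow, mul_sum]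
    refine sum_congr rfl fun m _ => ?_
    have : y ^ N * Q ^ N.choose 2 *
        jacobiTheta₂_term ((m : ℤ) - N) (u - T / 2 + 1 / 2) T = Q ^ m.choose 2 * y ^ m := by
      rw [hypow, hypow, hQpow, hQpow, jacobiTheta₂_term, ← Complex.exp_add, ← Complex.exp_add,
        ← Complex.exp_add, Nat.cast_choose_two, Nat.cast_choose_two]
      congr 1
      push_cast
      ring
    linear_combination -gaussBinom Q (2 * N) m * this

/-- Jacobi's triple product identity. -/
theorem jacobiTheta₂_eq_qPoch (u : ℂ) {T : ℂ} (hT : 0 < T.im) :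
    jacobiTheta₂ (u - T / 2 + 1 / 2) T =
      qPoch (cexp (2 * Real.pi * I * u)) (cexp (2 * Real.pi * I * T)) *
      qPoch (cexp (2 * Real.pi * I * (T - u))) (cexp (2 * Real.pi * I * T)) *
      qPoch (cexp (2 * Real.pi * I * T)) (cexp (2 * Real.pi * I * T)) := by
  have hQ : ‖cexp (2 * Real.pi * I * T)‖ < 1 := by
    rw [Complex.norm_exp, Real.exp_lt_one_iff]
    have : (2 * Real.pi * I * T).re = -(2 * Real.pi * T.im) := by simp
    rw [this]
    have := Real.pi_pos
    exact neg_neg_of_pos (by positivity)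
  have hfin := qPochFin_mul_qPochFin_eq_sum u T
  set Q := cexp (2 * Real.pi * I * T)
  set t : ℤ → ℂ := fun k => jacobiTheta₂_term k (u - T / 2 + 1 / 2) T with ht
  have hsum : Summable t := (summable_jacobiTheta₂_term_iff _ _).mpr hT
  obtain ⟨C, hC⟩ := exists_norm_gaussBinom_le hQ
  let f : ℕ → ℤ → ℂ := fun N k =>
    if 0 ≤ k + N then t k * gaussBinom Q (2 * N) (k + N).toNat else 0
  have hlim : Tendsto (fun N => ∑' k, f N k) atTop (𝓝 (∑' k, t k * (qPoch Q Q)⁻¹)) := by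
    refine tendsto_tsum_of_dominated_convergence (bound := fun k => ‖t k‖ * C)
      (hsum.norm.mul_right C) (fun k => ?_) (Eventually.of_forall fun N k => ?_)
    · have hq := tendsto_qPochFin Q hQ
      have h0 := qPoch_self_ne_zero hQ
      have hplus : Tendsto (fun N : ℕ => (k + N).toNat) atTop atTop :=
        tendsto_atTop.mpr fun b => by
          filter_upwards [eventually_ge_atTop (b + k.natAbs)] with N hN
          lia
      have hminus : Tendsto (fun N : ℕ => (N - k).toNat) atTop atTop :=
        tendsto_atTop.mpr fun b => by
          filter_upwards [eventually_ge_atTop (b + k.natAbs)] with N hN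
          lia
      have htwo : Tendsto (fun N : ℕ => 2 * N) atTop atTop :=
        tendsto_atTop.mpr fun b => by
          filter_upwards [eventually_ge_atTop b] with N hN
          lia
      have hmain := (((hq.comp htwo).mul ((hq.comp hplus).inv₀ h0)).mul
        ((hq.comp hminus).inv₀ h0)).const_mul (t k)
      rw [mul_inv_cancel₀ h0, one_mul] at hmain
      refine hmain.congr' ?_
      filter_upwards [eventually_ge_atTop k.natAbs] with N hN
      have e : 2 * N = (N - k).toNat + (k + N).toNat := by lia
      simp only [f, Function.comp_apply]
      rw [if_pos (by lia), e, gaussBinom_eq_div hQ]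
    · simp only [f]
      split_ifs
      · rw [norm_mul]
        exact mul_le_mul_of_nonneg_left (hC _ _) (norm_nonneg _)
      · rw [norm_zero]
        exact mul_nonneg (norm_nonneg _) ((norm_nonneg _).trans (hC 0 0))
  have hpart (N : ℕ) : ∑' k, f N k =
      qPochFin (cexp (2 * Real.pi * I * u)) Q N *
        qPochFin (cexp (2 * Real.pi * I * (T - u))) Q N := by
    have hinj : Function.Injective fun m : ℕ => (m : ℤ) - N := fun a b h => by
      simpa using h
    have hsupp : Function.support (f N) ⊆ Set.range fun m : ℕ => (m : ℤ) - N := by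
      intro k hk
      have : 0 ≤ k + N := by
        by_contra h
        exact hk (if_neg h)
      exact ⟨(k + N).toNat, by simp only; lia⟩
    rw [hfin N, ← hinj.tsum_eq hsupp, tsum_eq_sum (s := range (2 * N + 1))]
    · refine sum_congr rfl fun m _ => ?_
      simp [f, ht]
    · intro m hm
      have : 2 * N < m := by simpa [Nat.lt_succ_iff] using hm
      simp [f, gaussBinom_eq_zero_of_lt Q this]
  simp only [hpart] at hlim
  have h := tendsto_nhds_unique hlim ((tendsto_qPochFin _ hQ).mul (tendsto_qPochFin _ hQ))
  rw [tsum_mul_right] at h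
  rw [← h, inv_mul_cancel_right₀ (qPoch_self_ne_zero hQ)]
  rfl

/-- Jacobi's first theta function in terms of Mathlib's two-variable theta function. -/
lemma theta1_eq_jacobiTheta₂ (z : ℂ) {σ : ℂ} (hσ : 0 < σ.im) :
    theta1 z σ = I * cexp (Real.pi * I * σ / 4 - I * z) *
      jacobiTheta₂ (-z / Real.pi + σ / 2 + 1 / 2) σ := by
  have hpi : (Real.pi : ℂ) ≠ 0 := Complex.ofReal_ne_zero.mpr Real.pi_ne_zero
  set t : ℤ → ℂ := fun k => jacobiTheta₂_term k (-z / Real.pi + σ / 2 + 1 / 2) σ with ht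
  have hsum : Summable t := (summable_jacobiTheta₂_term_iff _ _).mpr hσ
  have hnat : Summable fun n : ℕ => t n := hsum.comp_injective Nat.cast_injective
  have hneg : Summable fun n : ℕ => t (-(n + 1 : ℤ)) :=
    hsum.comp_injective (i := fun n : ℕ => -(n + 1 : ℤ)) fun a b h => by simpa using h
  have hpow (n : ℕ) : (-1 : ℂ) ^ n = cexp (Real.pi * I * n) := by
    rw [← Complex.exp_pi_mul_I, ← Complex.exp_nat_mul, mul_comm]
  have hpos (n : ℕ) : cexp (Real.pi * I * σ / 4 - I * z) * t n =
      (-1) ^ n * cexp (Real.pi * I * σ * (2 * n + 1) ^ 2 / 4) *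
        cexp (-((2 * n + 1) * z) * I) := by
    rw [ht, hpow]
    simp only [jacobiTheta₂_term, ← Complex.exp_add]
    congr 1
    push_cast
    field_simp
    ring
  have hminus (n : ℕ) : cexp (Real.pi * I * σ / 4 - I * z) * t (-(n + 1 : ℤ)) =
      -((-1) ^ n * cexp (Real.pi * I * σ * (2 * n + 1) ^ 2 / 4) *
        cexp ((2 * n + 1) * z * I)) := by
    have hinv : (-1 : ℂ) ^ n = cexp (-(Real.pi * I * n)) := by
      rw [Complex.exp_neg, ← hpow, ← inv_pow]
      norm_num
    rw [ht, hinv]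
    simp only [jacobiTheta₂_term, ← Complex.exp_add]
    rw [← Complex.exp_sub_pi_mul_I]
    congr 1
    push_cast
    field_simp
    ring
  have hsplit : jacobiTheta₂ (-z / Real.pi + σ / 2 + 1 / 2) σ =
      ∑' n : ℕ, (t n + t (-(n + 1 : ℤ))) := by
    rw [hnat.tsum_add hneg]
    exact tsum_of_nat_of_neg_add_one hnat hneg
  rw [hsplit, theta1, ← tsum_mul_left, ← tsum_mul_left]
  refine tsum_congr fun n => ?_
  rw [mul_assoc I, mul_add, hpos, hminus, Complex.sin]
  ring

theorem theta1_at_jpi_over_n (n : ℕ) (hn : 2 ≤ n) (τ : ℂ) (hτ : 0 < τ.im)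
    (q : ℂ) (hq : q = Complex.exp (Real.pi * Complex.I * τ))
    (τ' : ℂ) (hτ' : τ' = -1 / τ) (j : ℕ) (hj1 : 1 ≤ j) (hj2 : j ≤ n - 2) :
    theta1 ((j : ℂ) * Real.pi / n) (τ' / n) =
      (-Complex.I * τ' / n) ^ (-(1 / 2) : ℂ) *
        Complex.exp (Real.pi * Complex.I * τ *
          ((j : ℂ) ^ 2 / n + (n : ℂ) / 4 - (j : ℂ))) *
        (qPoch (q ^ (2 * j)) (q ^ (2 * n)) * qPoch (q ^ (2 * n - 2 * j)) (q ^ (2 * n)) *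
          qPoch (q ^ (2 * n)) (q ^ (2 * n))) := by
  have hpi : (Real.pi : ℂ) ≠ 0 := Complex.ofReal_ne_zero.mpr Real.pi_ne_zero
  have hn0 : (n : ℂ) ≠ 0 := Nat.cast_ne_zero.mpr (by lia)
  have hτ0 : τ ≠ 0 := by
    rintro rfl
    simp at hτ
  have hT : 0 < ((n : ℂ) * τ).im := by
    have : 0 < (n : ℝ) := Nat.cast_pos.mpr (by lia)
    simpa using mul_pos this hτ
  have hσ_eq : τ' / n = -1 / (n * τ) := by
    rw [hτ']
    field_simp
  have hσ : 0 < (τ' / n).im := by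
    rw [hσ_eq, neg_div, one_div, Complex.neg_im, Complex.inv_im, neg_div, neg_neg]
    exact div_pos hT (Complex.normSq_pos.mpr (mul_ne_zero hn0 hτ0))
  have hqpow (k : ℕ) : q ^ k = cexp (Real.pi * I * (k * τ)) := by
    rw [hq, ← Complex.exp_nat_mul]
    congr 1
    ring
  have hq1 : q ^ (2 * j) = cexp (2 * Real.pi * I * (j * τ)) := by
    rw [hqpow]
    congr 1
    push_cast
    ring
  have hq2 : q ^ (2 * n) = cexp (2 * Real.pi * I * (n * τ)) := by
    rw [hqpow]
    congr 1
    push_cast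
    ring
  have hq3 : q ^ (2 * n - 2 * j) = cexp (2 * Real.pi * I * (n * τ - j * τ)) := by
    rw [hqpow, Nat.cast_sub (by lia)]
    congr 1
    push_cast
    ring
  rw [hq1, hq2, hq3, ← jacobiTheta₂_eq_qPoch _ hT, theta1_eq_jacobiTheta₂ _ hσ,
    jacobiTheta₂_functional_equation, mul_div_assoc (-I), Complex.cpow_neg, hσ_eq]
  have harg : (-((j : ℂ) * Real.pi / n) / Real.pi + -1 / (n * τ) / 2 + 1 / 2) / (-1 / (n * τ)) =
      j * τ - n * τ / 2 + 1 / 2 := by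
    field_simp
    ring
  have hinv : -1 / (-1 / ((n : ℂ) * τ)) = n * τ := by
    field_simp
  have hexp : I * cexp (Real.pi * I * (-1 / (n * τ)) / 4 - I * (j * Real.pi / n)) *
      cexp (-Real.pi * I * (-((j : ℂ) * Real.pi / n) / Real.pi + -1 / (n * τ) / 2 + 1 / 2) ^ 2 /
        (-1 / (n * τ))) =
      cexp (Real.pi * I * τ * ((j : ℂ) ^ 2 / n + (n : ℂ) / 4 - j)) := by
    nth_rewrite 1 [← Complex.exp_pi_div_two_mul_I]
    rw [← Complex.exp_add, ← Complex.exp_add]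
    congr 1
    field_simp
    ring
  rw [harg, hinv, ← hexp]
  ring
end
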